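/- arXiv:2011.13171 — 2 statements merged into one kernel-verified Lean document; each statement's English description precedes it below -/
import Mathlib

section
/- There exists a dense G_δ subset A of Cantor space with μ(A) = 1/2 such that for every finite binary word x : List Bool, 0 < μ(A ∩ I_x) < μ(I_x) = 2^(−|x|). In particular both A and its complement are dense and have measure 1/2. -/
open MeasureTheory

/-- The cylinder determined by a finite binary word `x`: the set of infinite binary
sequences having `x` as a prefix. -/
def Cyl (x : List Bool) : Set (ℕ → Bool) := {α | ∀ i : Fin x.length, α i.1 = x.get i}

/-- The uniform Bernoulli(1/2) ("fair coin") measure on `Bool`. -/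
noncomputable def coin : Measure Bool := (PMF.bernoulli 2⁻¹ (by norm_num)).toMeasure

/-- `μ` is the fair-coin measure on Cantor space: the product over `ℕ` of uniform
Bernoulli(1/2) measures, characterized by the fact that all finite-dimensional marginals
are finite products of `coin`. -/
def IsFairCoin (μ : Measure (ℕ → Bool)) : Prop :=
  IsProjectiveLimit μ (fun J : Finset ℕ => Measure.pi fun _ : J => coin)

/-!
Call `α n, …, α (n + 4 ^ n - 1)` a long run if it is constant. Long runs are so rare that almost
every `α` has only finitely many, while the one at position `0` is always present; so almost every
`α` has a last long run, and its value is a fair coin by the symmetry exchanging the two bits.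
Extending a word `x` by `4 ^ |x|` copies of `b` and then avoiding all later long runs shows that
both values occur with positive probability in every cylinder. Finally, having a last long run of
value `false` is an `F_σ` condition, so its negation defines the required `G_δ` set.
-/

section Measure

variable {X : Type*} [MeasurableSpace X] {μ : Measure X} {s t : Set X}

lemma measure_inter_lt_of_measure_compl_inter_pos (hs : MeasurableSet s) (hfin : μ (s ∩ t) ≠ ⊤)
    (hpos : 0 < μ (sᶜ ∩ t)) : μ (s ∩ t) < μ t :=
  calc μ (s ∩ t) < μ (s ∩ t) + μ (sᶜ ∩ t) := ENNReal.lt_add_right hfin hpos.ne'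
    _ = μ t := by
      rw [Set.inter_comm s, Set.inter_comm sᶜ, ← Set.sdiff_eq, measure_inter_add_sdiff t hs]

lemma measure_eq_half_of_disjoint [IsProbabilityMeasure μ] (ht : MeasurableSet t)
    (hdisj : Disjoint s t) (hcover : ∀ᵐ a ∂μ, a ∈ s ∪ t) (heq : μ s = μ t) : μ s = 1 / 2 := by
  have hsum : μ s + μ t = 1 := by
    rw [← measure_union hdisj ht]
    exact (measure_congr (Filter.eventuallyEq_univ.mpr hcover)).trans measure_univ
  rw [← heq, ← mul_two] at hsum
  exact (ENNReal.eq_div_iff two_ne_zero ENNReal.ofNat_ne_top).mpr (by rwa [mul_comm])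

end Measure

section Cylinder

variable {x y : List Bool} {α : ℕ → Bool}

lemma Cyl_eq_cylinder_of_mem (hα : α ∈ Cyl x) : Cyl x = PiNat.cylinder α x.length := by
  ext β
  refine ⟨fun hβ i hi => (hβ ⟨i, hi⟩).trans (hα ⟨i, hi⟩).symm, fun hβ i => ?_⟩
  exact (hβ i i.2).trans (hα i)

lemma getD_mem_Cyl (x : List Bool) (b : Bool) : (fun i => x.getD i b) ∈ Cyl x :=
  fun i => List.getD_eq_getElem x b i.2

lemma mem_Cyl_append :
    α ∈ Cyl (x ++ y) ↔ α ∈ Cyl x ∧ (fun i => α (x.length + i)) ∈ Cyl y := by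
  simp only [Cyl, Set.mem_ofPred_eq, Fin.forall_iff, List.length_append, List.get_eq_getElem]
  refine ⟨fun h => ⟨fun i hi => ?_, fun i hi => ?_⟩, fun ⟨hx, hy⟩ i hi => ?_⟩
  · rw [h i (by omega), List.getElem_append_left hi]
  · rw [h (x.length + i) (by omega), List.getElem_append_right (by omega)]
    simp only [Nat.add_sub_cancel_left]
  · rcases lt_or_ge i x.length with hix | hix
    · rw [hx i hix, List.getElem_append_left hix]
    · obtain ⟨j, rfl⟩ := Nat.exists_eq_add_of_le hix
      rw [hy j (by omega), List.getElem_append_right hix]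
      simp only [Nat.add_sub_cancel_left]

lemma dense_of_forall_inter_Cyl_nonempty {A : Set (ℕ → Bool)}
    (h : ∀ x, (A ∩ Cyl x).Nonempty) : Dense A := by
  rw [(PiNat.isTopologicalBasis_cylinders fun _ : ℕ => Bool).dense_iff]
  rintro _ ⟨α, n, rfl⟩ -
  have hα : α ∈ Cyl (List.ofFn fun i : Fin n => α i) := fun i => by simp
  simpa only [Cyl_eq_cylinder_of_mem hα, List.length_ofFn, Set.inter_comm A]
    using h (List.ofFn fun i : Fin n => α i)

end Cylinder

lemma coin_singleton (b : Bool) : coin {b} = 2⁻¹ := by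
  rw [coin, PMF.toMeasure_apply_singleton _ _ (measurableSet_singleton b), PMF.bernoulli_apply]
  cases b <;> norm_num [ENNReal.coe_sub]

instance isProbabilityMeasure_coin : IsProbabilityMeasure coin := by
  unfold coin
  infer_instance

lemma map_not_coin : coin.map Bool.not = coin := by
  refine Measure.ext_of_singleton fun b => ?_
  have hpre : Bool.not ⁻¹' {b} = {!b} := by
    ext c
    simp only [Set.mem_preimage, Set.mem_singleton_iff, Bool.not_eq_eq_eq_not]
  rw [Measure.map_apply (by fun_prop) (measurableSet_singleton b), hpre, coin_singleton,
    coin_singleton]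

namespace IsFairCoin

variable {μ : Measure (ℕ → Bool)}

lemma eq_infinitePi (hμ : IsFairCoin μ) : μ = Measure.infinitePi fun _ : ℕ => coin :=
  IsProjectiveLimit.unique hμ (Measure.isProjectiveLimit_infinitePi _)

lemma isProbabilityMeasure (hμ : IsFairCoin μ) : IsProbabilityMeasure μ := by
  rw [hμ.eq_infinitePi]
  infer_instance

lemma measure_pi_singleton (hμ : IsFairCoin μ) (S : Finset ℕ) (c : ℕ → Bool) :
    μ ((S : Set ℕ).pi fun i => {c i}) = 2⁻¹ ^ S.card := by
  rw [hμ.eq_infinitePi, Measure.infinitePi_pi _ fun _ _ => measurableSet_singleton _]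
  simp only [coin_singleton, Finset.prod_const]

lemma measure_Cyl (hμ : IsFairCoin μ) (x : List Bool) : μ (Cyl x) = 2⁻¹ ^ x.length := by
  rw [Cyl_eq_cylinder_of_mem (getD_mem_Cyl x true), PiNat.cylinder_eq_pi,
    hμ.measure_pi_singleton, Finset.card_range]

lemma measurePreserving_not (hμ : IsFairCoin μ) :
    MeasurePreserving (fun (α : ℕ → Bool) i => !α i) μ μ where
  measurable := by fun_prop
  map_eq := by
    rw [hμ.eq_infinitePi, Measure.infinitePi_map_pi (fun _ => coin) fun _ => by fun_prop]
    simp only [map_not_coin]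

end IsFairCoin

lemma add_four_pow_add_le (n k : ℕ) : n + 4 ^ n + (k + 3) ≤ 4 ^ (n + 1 + k) := by
  have hn : n < 4 ^ n := Nat.lt_pow_self (by norm_num)
  have hk : k < 4 ^ k := Nat.lt_pow_self (by norm_num)
  rw [pow_add, pow_succ]
  nlinarith

section LastRun

/-- The set of sequences with a long run at `n`, i.e. constant on the window `[n, n + 4 ^ n)`.
The first window has length one, so that a long run always exists, and the windows grow so fast
that the later long runs together have smaller probability than a word of length `n + 4 ^ n`. -/
def longRun (n : ℕ) : Set (ℕ → Bool) := {α | ∀ i ∈ Finset.Ico n (n + 4 ^ n), α i = α n}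

/-- The set of sequences whose last long run is the one at `n`. -/
def lastRun (n : ℕ) : Set (ℕ → Bool) := longRun n \ ⋃ m > n, longRun m

/-- The set of sequences which have a last long run, with value `b`. -/
def lastRunValue (b : Bool) : Set (ℕ → Bool) := ⋃ n, lastRun n ∩ {α | α n = b}

lemma mem_longRun_zero (α : ℕ → Bool) : α ∈ longRun 0 := by
  intro i hi
  rw [pow_zero, zero_add, Nat.Ico_zero_eq_range, Finset.mem_range, Nat.lt_one_iff] at hi
  rw [hi]

lemma isClopen_longRun (n : ℕ) : IsClopen (longRun n) := by
  have hinter : longRun n =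
      ⋂ i ∈ Finset.Ico n (n + 4 ^ n), (fun α => (α i, α n)) ⁻¹' Set.diagonal Bool := by
    ext α
    simp only [longRun, Set.mem_ofPred_eq, Set.mem_iInter, Set.mem_preimage, Set.mem_diagonal_iff]
  rw [hinter]
  exact isClopen_biInter_finset fun i _ => (isClopen_discrete _).preimage (by fun_prop)

lemma isClosed_lastRun (n : ℕ) : IsClosed (lastRun n) :=
  (isClopen_longRun n).isClosed.sdiff (isOpen_biUnion fun m _ => (isClopen_longRun m).isOpen)

lemma isGδ_compl_lastRunValue (b : Bool) : IsGδ (lastRunValue b)ᶜ := by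
  have hclosed (n : ℕ) : IsClosed (lastRun n ∩ {α | α n = b}) :=
    (isClosed_lastRun n).inter (isClosed_singleton.preimage (continuous_apply n))
  rw [lastRunValue, Set.compl_iUnion]
  exact .iInter_of_isOpen fun n => (hclosed n).isOpen_compl

lemma measurableSet_lastRunValue (b : Bool) : MeasurableSet (lastRunValue b) :=
  (isGδ_compl_lastRunValue b).measurableSet.of_compl

lemma pairwise_disjoint_lastRun : Pairwise (Function.onFun Disjoint lastRun) :=
  (pairwise_disjoint_on lastRun).mpr fun _ _ hmn =>
    Set.disjoint_left.mpr fun _ hm hn => hm.2 (Set.mem_biUnion hmn hn.1)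

lemma disjoint_lastRunValue {a b : Bool} (hab : a ≠ b) :
    Disjoint (lastRunValue a) (lastRunValue b) := by
  simp only [lastRunValue, Set.disjoint_iUnion_left, Set.disjoint_iUnion_right]
  intro m n
  rcases eq_or_ne m n with rfl | hmn
  · refine Set.disjoint_left.mpr fun α ha hb => ?_
    exact hab (ha.2.symm.trans hb.2)
  · exact (pairwise_disjoint_lastRun hmn.symm).mono Set.inter_subset_left Set.inter_subset_left

lemma not_preimage_longRun (n : ℕ) : (fun (α : ℕ → Bool) i => !α i) ⁻¹' longRun n = longRun n := by
  simp only [longRun, Set.preimage_ofPred_eq, Bool.not_inj_iff]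

lemma not_preimage_lastRunValue (b : Bool) :
    (fun (α : ℕ → Bool) i => !α i) ⁻¹' lastRunValue b = lastRunValue (!b) := by
  simp only [lastRunValue, lastRun, Set.preimage_iUnion, Set.preimage_inter, Set.preimage_sdiff,
    not_preimage_longRun, Set.preimage_ofPred_eq, Bool.not_eq_eq_eq_not]

lemma exists_mem_lastRun_of_finite {α : ℕ → Bool} (hfin : {n | α ∈ longRun n}.Finite) :
    ∃ n, α ∈ lastRun n := by
  obtain ⟨n, hn, hmax⟩ := hfin.exists_maximal ⟨0, mem_longRun_zero α⟩
  refine ⟨n, hn, fun hlater => ?_⟩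
  obtain ⟨m, hnm, hm⟩ := Set.mem_iUnion₂.mp hlater
  exact (hmax hm hnm.le).not_gt hnm

lemma mem_longRun_and_apply_eq_of_mem_Cyl_append {x : List Bool} {b : Bool} {α : ℕ → Bool}
    (hα : α ∈ Cyl (x ++ List.replicate (4 ^ x.length) b)) :
    α ∈ longRun x.length ∧ α x.length = b := by
  have hrun (i : ℕ) (hi : i < 4 ^ x.length) : α (x.length + i) = b := by
    simpa using (mem_Cyl_append.mp hα).2 ⟨i, by simpa using hi⟩
  have hvalue : α x.length = b := hrun 0 (by positivity)
  refine ⟨fun i hi => ?_, hvalue⟩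
  obtain ⟨hle, hlt⟩ := Finset.mem_Ico.mp hi
  obtain ⟨j, rfl⟩ := Nat.exists_eq_add_of_le hle
  rw [hrun j (by omega), hvalue]

lemma Cyl_append_replicate_sdiff_subset (x : List Bool) (b : Bool) :
    Cyl (x ++ List.replicate (4 ^ x.length) b) \ ⋃ m > x.length, longRun m ⊆
      lastRunValue b ∩ Cyl x := by
  rintro α ⟨hα, hlater⟩
  obtain ⟨hrun, hvalue⟩ := mem_longRun_and_apply_eq_of_mem_Cyl_append hα
  exact ⟨Set.mem_iUnion.mpr ⟨x.length, ⟨hrun, hlater⟩, hvalue⟩, (mem_Cyl_append.mp hα).1⟩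

namespace IsFairCoin

variable {μ : Measure (ℕ → Bool)}

lemma measure_longRun_le (hμ : IsFairCoin μ) (n : ℕ) : μ (longRun n) ≤ 2 * 2⁻¹ ^ 4 ^ n := by
  set I := Finset.Ico n (n + 4 ^ n)
  have hcover : longRun n ⊆ ⋃ b : Bool, (I : Set ℕ).pi fun _ => {b} :=
    fun α hα => Set.mem_iUnion.mpr ⟨α n, hα⟩
  calc μ (longRun n) ≤ ∑ b : Bool, μ ((I : Set ℕ).pi fun _ => {b}) :=
        (measure_mono hcover).trans (measure_iUnion_fintype_le _ _)
    _ = ∑ _b : Bool, 2⁻¹ ^ 4 ^ n := by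
        refine Finset.sum_congr rfl fun b _ => ?_
        rw [hμ.measure_pi_singleton I fun _ => b, Nat.card_Ico, Nat.add_sub_cancel_left]
    _ = 2 * 2⁻¹ ^ 4 ^ n := by rw [Fintype.sum_bool, two_mul]

lemma tsum_measure_longRun_lt (hμ : IsFairCoin μ) (n : ℕ) :
    ∑' k, μ (longRun (n + 1 + k)) < 2⁻¹ ^ (n + 4 ^ n) := by
  have hterm (k : ℕ) : μ (longRun (n + 1 + k)) ≤ 2⁻¹ ^ (n + 4 ^ n) * 2⁻¹ * 2⁻¹ ^ (k + 1) := by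
    calc μ (longRun (n + 1 + k)) ≤ 2 * 2⁻¹ ^ 4 ^ (n + 1 + k) := hμ.measure_longRun_le _
      _ ≤ 2 * 2⁻¹ ^ (n + 4 ^ n + (k + 3)) :=
          mul_le_mul_right (pow_le_pow_right_of_le_one' (by simp) (add_four_pow_add_le n k)) _
      _ = 2⁻¹ ^ (n + 4 ^ n) * 2⁻¹ * 2⁻¹ ^ (k + 1) * (2 * 2⁻¹) := by ring
      _ = 2⁻¹ ^ (n + 4 ^ n) * 2⁻¹ * 2⁻¹ ^ (k + 1) := by
          rw [ENNReal.mul_inv_cancel two_ne_zero ENNReal.ofNat_ne_top, mul_one]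
  calc ∑' k, μ (longRun (n + 1 + k))
      ≤ ∑' k : ℕ, 2⁻¹ ^ (n + 4 ^ n) * 2⁻¹ * 2⁻¹ ^ (k + 1) := ENNReal.tsum_le_tsum hterm
    _ = 2⁻¹ ^ (n + 4 ^ n) / 2 := by
        rw [ENNReal.tsum_mul_left, ENNReal.tsum_geometric_add_one, ENNReal.one_sub_inv_two,
          ENNReal.mul_inv_cancel (by simp) (by simp), mul_one, div_eq_mul_inv]
    _ < 2⁻¹ ^ (n + 4 ^ n) := ENNReal.half_lt_self (by simp) (by simp)

lemma measure_iUnion_longRun_lt (hμ : IsFairCoin μ) (n : ℕ) :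
    μ (⋃ m > n, longRun m) < 2⁻¹ ^ (n + 4 ^ n) := by
  have hreindex : ⋃ m > n, longRun m ⊆ ⋃ k, longRun (n + 1 + k) := by
    refine Set.iUnion₂_subset fun m hnm => ?_
    obtain ⟨k, rfl⟩ := Nat.exists_eq_add_of_le (Nat.succ_le_of_lt hnm)
    exact Set.subset_iUnion (fun k => longRun (n + 1 + k)) k
  calc μ (⋃ m > n, longRun m) ≤ ∑' k, μ (longRun (n + 1 + k)) :=
        (measure_mono hreindex).trans (measure_iUnion_le _)
    _ < 2⁻¹ ^ (n + 4 ^ n) := hμ.tsum_measure_longRun_lt n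

lemma tsum_measure_longRun_ne_top (hμ : IsFairCoin μ) : ∑' n, μ (longRun n) ≠ ⊤ := by
  have := hμ.isProbabilityMeasure
  rw [tsum_eq_zero_add' ENNReal.summable]
  refine ENNReal.add_ne_top.mpr ⟨measure_ne_top _ _, ?_⟩
  simpa only [zero_add, add_comm] using (hμ.tsum_measure_longRun_lt 0).ne_top

lemma ae_mem_lastRunValue (hμ : IsFairCoin μ) (b : Bool) :
    ∀ᵐ α ∂μ, α ∈ lastRunValue b ∪ lastRunValue (!b) := by
  filter_upwards [ae_finite_setOfPred_mem hμ.tsum_measure_longRun_ne_top] with α hfin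
  obtain ⟨n, hn⟩ := exists_mem_lastRun_of_finite hfin
  exact (Bool.eq_or_eq_not (α n) b).imp (fun hb => Set.mem_iUnion.mpr ⟨n, hn, hb⟩)
    (fun hb => Set.mem_iUnion.mpr ⟨n, hn, hb⟩)

lemma measure_lastRunValue (hμ : IsFairCoin μ) (b : Bool) : μ (lastRunValue b) = 1 / 2 := by
  have := hμ.isProbabilityMeasure
  have hsymm : μ (lastRunValue b) = μ (lastRunValue (!b)) := by
    rw [← hμ.measurePreserving_not.measure_preimage
      (measurableSet_lastRunValue b).nullMeasurableSet, not_preimage_lastRunValue]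
  exact measure_eq_half_of_disjoint (measurableSet_lastRunValue (!b))
    (disjoint_lastRunValue (Bool.not_ne_self b).symm) (hμ.ae_mem_lastRunValue b) hsymm

lemma measure_lastRunValue_inter_Cyl_pos (hμ : IsFairCoin μ) (b : Bool) (x : List Bool) :
    0 < μ (lastRunValue b ∩ Cyl x) := by
  set C := Cyl (x ++ List.replicate (4 ^ x.length) b)
  set L := ⋃ m > x.length, longRun m
  have hlt : μ L < μ C := by
    rw [hμ.measure_Cyl, List.length_append, List.length_replicate]
    exact hμ.measure_iUnion_longRun_lt x.length
  calc 0 < μ C - μ L := tsub_pos_of_lt hlt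
    _ ≤ μ (C \ L) := le_measure_sdiff
    _ ≤ μ (lastRunValue b ∩ Cyl x) := measure_mono (Cyl_append_replicate_sdiff_subset x b)

end IsFairCoin

end LastRun

/-- There is a dense `G_δ` subset `A` of Cantor space with `μ A = 1/2` such that
`0 < μ (A ∩ I_x) < μ I_x = 2^(-|x|)` for every finite binary word `x`; in particular
both `A` and its complement are dense of measure `1/2`. -/
theorem stmt9 (μ : Measure (ℕ → Bool)) (hμ : IsFairCoin μ) :
    ∃ A : Set (ℕ → Bool),
      IsGδ A ∧ Dense A ∧ μ A = 1 / 2 ∧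
      (∀ x : List Bool,
        0 < μ (A ∩ Cyl x) ∧ μ (A ∩ Cyl x) < μ (Cyl x) ∧
          μ (Cyl x) = 2 ^ (-(x.length : ℤ))) ∧
      Dense Aᶜ ∧ μ Aᶜ = 1 / 2 := by
  have := hμ.isProbabilityMeasure
  set B := lastRunValue false
  have hB : MeasurableSet B := measurableSet_lastRunValue false
  have hBhalf : μ B = 1 / 2 := hμ.measure_lastRunValue false
  have hpos (x : List Bool) : 0 < μ (Bᶜ ∩ Cyl x) :=
    (hμ.measure_lastRunValue_inter_Cyl_pos true x).trans_le
      (measure_mono (Set.inter_subset_inter_left _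
        (disjoint_lastRunValue Bool.false_ne_true.symm).subset_compl_right))
  have hpos_compl (x : List Bool) : 0 < μ (Bᶜᶜ ∩ Cyl x) := by
    rw [compl_compl]
    exact hμ.measure_lastRunValue_inter_Cyl_pos false x
  refine ⟨Bᶜ, isGδ_compl_lastRunValue false,
    dense_of_forall_inter_Cyl_nonempty fun x => nonempty_of_measure_ne_zero (hpos x).ne', ?_,
    fun x => ⟨hpos x, ?_, ?_⟩,
    dense_of_forall_inter_Cyl_nonempty fun x => nonempty_of_measure_ne_zero (hpos_compl x).ne', ?_⟩
  · rw [prob_compl_eq_one_sub hB, hBhalf, one_div, ENNReal.one_sub_inv_two]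
  · exact measure_inter_lt_of_measure_compl_inter_pos hB.compl (measure_ne_top _ _) (hpos_compl x)
  · rw [hμ.measure_Cyl, ENNReal.zpow_neg, zpow_natCast, ENNReal.inv_pow]
  · rw [compl_compl, hBhalf]
end

section
/- Let Q be a type, enc : List Bool × Finset Q × Q → Q an injective function, and q₀ : Q an element not in the range of enc. Define, for a : Set Q, fun a : (ℕ → Bool) → Set Q → Set Q by fun a α v = {q | ∃ x a prefix of α, ∃ c : Finset Q, ↑c ⊆ v ∧ enc (x, c, q) ∈ a}; and define, for f : (ℕ → Bool) → Set Q → Set Q, lam f = {enc (x, c, q) | ∀ β ∈ I_x, q ∈ f β ↑c} ∪ {q₀}. Suppose f satisfies: (a) for every b : Set Q, α ↦ f α b is continuous from the Cantor topology to the Scott topology on Set Q; and (b) for every α, f α b = ⋃ {f α ↑c | c : Finset Q, ↑c ⊆ b}. Then fun (lam f) = f. -/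
/-- `fun a α v`: application in the reflexive domain `Val = Set Q`, where `a` is viewed as
a (coded) set of triples `(x, c, q)`. -/
def funApp {Q : Type*} (enc : List Bool × Finset Q × Q → Q) (a : Set Q) :
    (ℕ → Bool) → Set Q → Set Q := fun α v =>
  {q | ∃ x : List Bool, α ∈ Cyl x ∧ ∃ c : Finset Q, (c : Set Q) ⊆ v ∧ enc (x, c, q) ∈ a}

/-- `lam f`: abstraction in the reflexive domain `Val = Set Q`, the coded set of all
triples `(x, c, q)` with `q ∈ f β c` for all `β ∈ I_x`, together with the extra
element `q₀`. -/
def lamAbs {Q : Type*} (enc : List Bool × Finset Q × Q → Q) (q₀ : Q)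
    (f : (ℕ → Bool) → Set Q → Set Q) : Set Q :=
  {r | ∃ (x : List Bool) (c : Finset Q) (q : Q),
    (∀ β ∈ Cyl x, q ∈ f β (c : Set Q)) ∧ r = enc (x, c, q)} ∪ {q₀}

/-!
A triple `(x, c, q)` records a finite observation of `f`: on all of `I_x`, the input `c` already
yields `q`. Decoding such observations is sound because `f α` is monotone. It is complete because an
output `q ∈ f α v` uses only a finite part `c` of `v`, by (b), and only a finite prefix `x` of `α`:
the sets containing `q` are those above the compact element `{q}`, hence form a Scott-open set, so
by (a) `{β | q ∈ f β c}` is open and contains a cylinder around `α`.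
-/

open Set Topology

section ScottTopology

theorem isOpen_Ici_of_isCompactElement {α : Type*} {D : Set (Set α)} [PartialOrder α]
    [TopologicalSpace α] [IsScott α D] {k : α} (hk : IsCompactElement k) : IsOpen (Ici k) := by
  refine (IsScott.isOpen_iff_isUpperSet_and_dirSupInaccOn (D := D)).2 ⟨isUpperSet_Ici k, ?_⟩
  intro d _ hne hdir a hlub hka
  exact hk d a hne hdir hlub hka

theorem isCompactElement_singleton {Q : Type*} (q : Q) : IsCompactElement ({q} : Set Q) := by
  intro d u _ _ hlub hqu
  obtain rfl : u = ⋃₀ d := hlub.unique (isLUB_sSup d)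
  simpa only [singleton_subset_iff, mem_sUnion] using hqu

theorem isOpen_setOf_mem_of_continuous_scott {X Q : Type*} [TopologicalSpace X] {g : X → Set Q}
    (hg : Continuous[_, scott (Set Q) univ] g) (q : Q) : IsOpen {x | q ∈ g x} := by
  let _ : TopologicalSpace (Set Q) := scott (Set Q) univ
  have : IsScott (Set Q) univ := ⟨rfl⟩
  have hpre : {x | q ∈ g x} = g ⁻¹' Ici {q} := by
    ext x
    simp only [mem_ofPred_eq, mem_preimage, mem_Ici, singleton_subset_iff]
  rw [hpre]
  exact (isOpen_Ici_of_isCompactElement (D := univ) (isCompactElement_singleton q)).preimage hg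

end ScottTopology

section Cylinders

theorem cyl_ofFn (α : ℕ → Bool) (n : ℕ) :
    Cyl (List.ofFn fun i : Fin n ↦ α i) = PiNat.cylinder α n := by
  ext β
  simp [Cyl, Fin.forall_iff]

theorem exists_mem_cyl_subset_of_isOpen {U : Set (ℕ → Bool)} (hU : IsOpen U) {α : ℕ → Bool}
    (hα : α ∈ U) : ∃ x, α ∈ Cyl x ∧ Cyl x ⊆ U := by
  obtain ⟨_, ⟨β, n, rfl⟩, hαβ, hsub⟩ :=
    (PiNat.isTopologicalBasis_cylinders fun _ ↦ Bool).exists_subset_of_mem_open hα hU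
  rw [← PiNat.mem_cylinder_iff_eq.1 hαβ, ← cyl_ofFn] at hsub
  refine ⟨_, ?_, hsub⟩
  rw [cyl_ofFn]
  exact PiNat.self_mem_cylinder α n

end Cylinders

/-- A set operator is finitary if its value at `b` is the union of its values at the finite subsets
of `b`. On power sets this is Scott continuity. -/
def IsFinitary {Q R : Type*} (F : Set Q → Set R) : Prop :=
  ∀ b, F b = ⋃ (c : Finset Q) (_ : (c : Set Q) ⊆ b), F c

namespace IsFinitary

variable {Q R : Type*} {F : Set Q → Set R}

theorem mem_iff (hF : IsFinitary F) {b : Set Q} {r : R} :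
    r ∈ F b ↔ ∃ c : Finset Q, (c : Set Q) ⊆ b ∧ r ∈ F c := by
  rw [hF b]
  simp only [mem_iUnion, exists_prop]

theorem monotone (hF : IsFinitary F) : Monotone F := by
  intro b b' hbb' r hr
  obtain ⟨c, hcb, hrc⟩ := hF.mem_iff.1 hr
  exact hF.mem_iff.2 ⟨c, hcb.trans hbb', hrc⟩

end IsFinitary

section Retraction

variable {Q : Type*} {enc : List Bool × Finset Q × Q → Q} {q₀ : Q}
  {f : (ℕ → Bool) → Set Q → Set Q} {α : ℕ → Bool}

theorem enc_mem_lamAbs {x : List Bool} {c : Finset Q} {q : Q} (h : ∀ β ∈ Cyl x, q ∈ f β c) :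
    enc (x, c, q) ∈ lamAbs enc q₀ f :=
  Or.inl ⟨x, c, q, h, rfl⟩

theorem enc_mem_lamAbs_iff (henc : Function.Injective enc) (hq₀ : q₀ ∉ range enc)
    {x : List Bool} {c : Finset Q} {q : Q} :
    enc (x, c, q) ∈ lamAbs enc q₀ f ↔ ∀ β ∈ Cyl x, q ∈ f β c := by
  refine ⟨?_, enc_mem_lamAbs⟩
  rintro (⟨x', c', q', h, heq⟩ | heq)
  · obtain ⟨rfl, rfl, rfl⟩ : x = x' ∧ c = c' ∧ q = q' := by
      simpa only [Prod.mk.injEq] using henc heq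
    exact h
  · exact absurd ⟨_, heq⟩ hq₀

theorem funApp_lamAbs_subset (henc : Function.Injective enc) (hq₀ : q₀ ∉ range enc)
    (hf : Monotone (f α)) (v : Set Q) : funApp enc (lamAbs enc q₀ f) α v ⊆ f α v := by
  rintro q ⟨x, hαx, c, hcv, hmem⟩
  exact hf hcv ((enc_mem_lamAbs_iff henc hq₀).1 hmem α hαx)

theorem subset_funApp_lamAbs (hopen : ∀ (c : Finset Q) (q : Q), IsOpen {β | q ∈ f β c})
    (hf : IsFinitary (f α)) (v : Set Q) : f α v ⊆ funApp enc (lamAbs enc q₀ f) α v := by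
  intro q hq
  obtain ⟨c, hcv, hqc⟩ := hf.mem_iff.1 hq
  obtain ⟨x, hαx, hx⟩ := exists_mem_cyl_subset_of_isOpen (hopen c q) hqc
  exact ⟨x, hαx, c, hcv, enc_mem_lamAbs hx⟩

end Retraction

/-- If `enc` is injective with `q₀` outside its range, and
`f : (ℕ → Bool) → Set Q → Set Q` is (a) continuous in its first argument from the Cantor
topology to the Scott topology on `Set Q` and (b) Scott-continuous in its second
argument, then `fun (lam f) = f`. -/
theorem stmt18 {Q : Type*} (enc : List Bool × Finset Q × Q → Q) (q₀ : Q)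
    (henc : Function.Injective enc) (hq₀ : q₀ ∉ Set.range enc)
    (f : (ℕ → Bool) → Set Q → Set Q)
    (ha : ∀ b : Set Q,
      @Continuous (ℕ → Bool) (Set Q) _ (Topology.scott (Set Q) Set.univ) (fun α => f α b))
    (hb : ∀ (α : ℕ → Bool) (b : Set Q),
      f α b = ⋃ (c : Finset Q) (_ : (c : Set Q) ⊆ b), f α (c : Set Q)) :
    funApp enc (lamAbs enc q₀ f) = f := by
  funext α v
  have hfin : IsFinitary (f α) := hb α
  have hopen : ∀ (c : Finset Q) (q : Q), IsOpen {β | q ∈ f β c} := fun c ↦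
    isOpen_setOf_mem_of_continuous_scott (ha c)
  exact (funApp_lamAbs_subset henc hq₀ hfin.monotone v).antisymm
    (subset_funApp_lamAbs hopen hfin v)
end
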